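/- Let K be a field of characteristic zero, let G be a finite group acting K-linearly on a finite-dimensional K-vector space W, and set t = |G|. Let r ≥ s ≥ t be positive integers. Let G act on W ⊗ K^r via the first factor (trivially on K^r) and let GL_r(K) act on W ⊗ K^r via the second factor, so both induce degree-preserving algebra automorphisms of the exterior algebra Λ(W ⊗ K^r), and the two actions commute. Regard Λ(W ⊗ K^s) as a subalgebra of Λ(W ⊗ K^r) via the standard inclusion K^s ↪ K^r (onto the first s coordinates). If S ⊆ Λ(W ⊗ K^s)^G generates Λ(W ⊗ K^s)^G as a K-algebra, then the polarized set { B · f : f ∈ S, B ∈ GL_r(K) } generates Λ(W ⊗ K^r)^G as a K-algebra. (Polarization for the exterior algebra.) -/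

import Mathlib

/-- The action of `g ∈ G` on `Λ(W ⊗ K^m)` induced by the action on the first
tensor factor. -/
noncomputable def extGAct (K : Type*) [Field K] {G : Type*} [Group G]
    {W : Type*} [AddCommGroup W] [Module K W] (ρ : Representation K G W)
    (m : ℕ) (g : G) :
    ExteriorAlgebra K (TensorProduct K W (Fin m → K)) →ₐ[K]
      ExteriorAlgebra K (TensorProduct K W (Fin m → K)) :=
  ExteriorAlgebra.map (TensorProduct.map (ρ g) LinearMap.id)

/-- The action of `B ∈ GL_m(K)` on `Λ(W ⊗ K^m)` induced by the natural action
on the second tensor factor. -/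
noncomputable def extGLAct (K : Type*) [Field K]
    (W : Type*) [AddCommGroup W] [Module K W]
    (m : ℕ) (B : Matrix.GeneralLinearGroup (Fin m) K) :
    ExteriorAlgebra K (TensorProduct K W (Fin m → K)) →ₐ[K]
      ExteriorAlgebra K (TensorProduct K W (Fin m → K)) :=
  ExteriorAlgebra.map
    (TensorProduct.map LinearMap.id (Matrix.toLin' (B : Matrix (Fin m) (Fin m) K)))

/-- The standard inclusion `K^s ↪ K^r` (`s ≤ r`), onto the first `s`
coordinates. -/
noncomputable def stdIncl (K : Type*) [Field K] (s r : ℕ) (h : s ≤ r) :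
    (Fin s → K) →ₗ[K] (Fin r → K) :=
  ∑ i : Fin s, LinearMap.smulRight (LinearMap.proj i) (Pi.single (Fin.castLE h i) (1 : K))

/-- The induced algebra embedding `Λ(W ⊗ K^s) → Λ(W ⊗ K^r)`. -/
noncomputable def extIncl (K : Type*) [Field K]
    (W : Type*) [AddCommGroup W] [Module K W] (s r : ℕ) (h : s ≤ r) :
    ExteriorAlgebra K (TensorProduct K W (Fin s → K)) →ₐ[K]
      ExteriorAlgebra K (TensorProduct K W (Fin r → K)) :=
  ExteriorAlgebra.map (TensorProduct.map LinearMap.id (stdIncl K s r h))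

/-!
Let `V = W ⊗ U` be the degree-one part of `Λ(W ⊗ U)`. In the algebra of functions
`G → Λ(W ⊗ U)`, for vectors `y i ∈ V` indexed through an enumeration `e` of `G`, the product of
the functions `g ↦ y i - g (e i)⁻¹ (y i)` is zero, because at every `g` one factor vanishes. As
elements of `V` anticommute, expanding this product, multiplying by a further product `z` and
applying the transfer twice writes `|G| • tr (y₁ ⋯ y_|G| z)` as a sum of products
`tr a * tr (b * z)` in which `a` and `b * z` have smaller degree. Hence the invariants are generated
by the transfers of products of at most `|G|` vectors `w i ⊗ u i`.

If the `u i` are linearly independent, such a product is a `GL(U)`-translate of the image of a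
product over the smaller space, hence its transfer lies in the algebra generated by the polarized
set. This suffices: a multilinear map in at most `dim U` variables whose values on linearly
independent tuples lie in a subgroup takes all its values there, since a vector `y` in a proper
subspace is the difference `(y + x) - x` of two vectors outside it.
-/

section LinearIndependent

theorem exists_linearEquiv_apply_eq_of_linearIndependent {K U ι : Type*} [DivisionRing K]
    [AddCommGroup U] [Module K U] [Finite ι] {u v : ι → U}
    (hu : LinearIndependent K u) (hv : LinearIndependent K v) :
    ∃ g : U ≃ₗ[K] U, ∀ i, g (u i) = v i := by
  have : FiniteDimensional K (Submodule.span K (Set.range u)) :=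
    FiniteDimensional.span_of_finite K (Set.finite_range u)
  obtain ⟨g, hg⟩ := Submodule.exists_linearEquiv_restrict_eq
    (hu.linearCombinationEquiv.symm ≪≫ₗ hv.linearCombinationEquiv)
  refine ⟨g, fun i => ?_⟩
  simpa using (hg (hu.linearCombinationEquiv (Finsupp.single i 1))).symm

theorem exists_notMem_span_image_of_card_lt_rank {R M ι : Type*} [Ring R] [StrongRankCondition R]
    [AddCommGroup M] [Module R M] (v : ι → M) (s : Finset ι) (hs : s.card < Module.rank R M) :
    ∃ x, x ∉ Submodule.span R (v '' s) := by
  classical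
  by_contra! h
  refine hs.not_ge ?_
  rw [← rank_top, ← Submodule.eq_top_iff'.2 h, ← Finset.coe_image]
  exact (rank_span_finset_le _).trans (by exact_mod_cast Finset.card_image_le)

theorem multilinearMap_mem_of_forall_linearIndependent {K U M ι S : Type*} [Field K]
    [AddCommGroup U] [Module K U] [AddCommGroup M] [Module K M] [Fintype ι] [SetLike S M]
    [AddSubgroupClass S M] (N : S) (f : MultilinearMap K (fun _ : ι => U) M)
    (hι : Fintype.card ι ≤ Module.rank K U)
    (hf : ∀ v, LinearIndependent K v → f v ∈ N) (v : ι → U) : f v ∈ N := by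
  classical
  suffices mem_of_linearIndepOn_compl : ∀ (t : Finset ι) (v : ι → U),
      LinearIndepOn K v ((tᶜ : Finset ι) : Set ι) → f v ∈ N from
    mem_of_linearIndepOn_compl Finset.univ v (by simp)
  intro t
  induction t using Finset.induction_on with
  | empty => exact fun v hv => hf v (by simpa [linearIndepOn_univ_iff] using hv)
  | insert i t hi ih =>
    intro v hv
    set s := (insert i t)ᶜ with hs
    have his : i ∉ s := by simp [hs]
    have hts : tᶜ = insert i s := by simp [hs, Finset.compl_insert, hi]
    simp only [hts, Finset.coe_insert] at ih
    have mem_of_notMem : ∀ x ∉ Submodule.span K (v '' s), f (Function.update v i x) ∈ N := by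
      intro x hx
      have hcongr : Set.EqOn (Function.update v i x) v s := fun j hj =>
        Function.update_of_ne (ne_of_mem_of_not_mem hj his) _ _
      refine ih _ (((linearIndepOn_congr hcongr).2 hv).insert ?_)
      rwa [Function.update_self, hcongr.image_eq]
    by_cases hvi : v i ∈ Submodule.span K (v '' s)
    · obtain ⟨x, hx⟩ := exists_notMem_span_image_of_card_lt_rank (R := K) v s
        (lt_of_lt_of_le (by exact_mod_cast Finset.card_lt_univ_of_notMem his) hι)
      have hsub := sub_mem (mem_of_notMem (v i + x) fun h => hx ((add_mem_cancel_left hvi).1 h))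
        (mem_of_notMem x hx)
      rwa [← f.map_update_sub, add_sub_cancel_right, Function.update_eq_self] at hsub
    · simpa using mem_of_notMem _ hvi

end LinearIndependent

section NoncommutativeExpansion

theorem mul_pow_le_pow_mul {α : Type*} [Monoid α] [Preorder α] [MulLeftMono α] [MulRightMono α]
    {p q : α} (hqp : q * p ≤ p * q) (n : ℕ) : q * p ^ n ≤ p ^ n * q := by
  induction n with
  | zero => simp
  | succ n ih =>
    calc q * p ^ (n + 1) = q * p ^ n * p := by rw [pow_succ, mul_assoc]
      _ ≤ p ^ n * q * p := by gcongr
      _ = p ^ n * (q * p) := mul_assoc _ _ _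
      _ ≤ p ^ n * (p * q) := by gcongr
      _ = p ^ (n + 1) * q := by rw [pow_succ, mul_assoc]

theorem mul_add_pow_le {α : Type*} [IdemSemiring α] {p q : α} (hqp : q * p ≤ p * q) {a c : α}
    {n : ℕ} (h : ∀ i j, i + j = n → a * p ^ i * q ^ j ≤ c) : a * (p + q) ^ n ≤ c := by
  induction n generalizing a with
  | zero => simpa using h 0 0 rfl
  | succ n ih =>
    rw [pow_succ', ← mul_assoc]
    refine ih fun i j hij => ?_
    have hp : a * p * p ^ i * q ^ j ≤ c := by
      rw [mul_assoc a, ← pow_succ']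
      exact h (i + 1) j (by lia)
    have hq : a * q * p ^ i * q ^ j ≤ c :=
      calc a * q * p ^ i * q ^ j = a * (q * p ^ i) * q ^ j := by rw [mul_assoc a]
        _ ≤ a * (p ^ i * q) * q ^ j := by gcongr ?_ * _; grw [mul_pow_le_pow_mul hqp i]
        _ = a * p ^ i * q ^ (j + 1) := by simp only [pow_succ', mul_assoc]
        _ ≤ c := h i (j + 1) (by lia)
    rw [mul_add, add_mul, add_mul]
    exact add_le hp hq

theorem prod_ofFn_sub_sub_prod_ofFn_mem {R A : Type*} [CommRing R] [Ring A] [Algebra R A]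
    {P Q : Submodule R A} (hQP : Q * P ≤ P * Q) {n : ℕ} {p q : Fin (n + 1) → A}
    (hp : ∀ i, p i ∈ P) (hq : ∀ i, q i ∈ Q) :
    (List.ofFn fun i => q i - p i).prod - (List.ofFn q).prod ∈ P * (P + Q) ^ n := by
  have hP : P ≤ P + Q := by simp
  have hQ : Q ≤ P + Q := by simp
  induction n with
  | zero => simpa using hp 0
  | succ n ih =>
    set x := (List.ofFn fun i : Fin (n + 1) => q i.succ - p i.succ).prod
    set y := (List.ofFn fun i : Fin (n + 1) => q i.succ).prod
    have hx : x ∈ (P + Q) ^ (n + 1) := by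
      rw [Submodule.pow_eq_span_pow_set]
      exact Submodule.subset_span
        (Set.mem_pow.2 ⟨fun i => ⟨_, sub_mem (hQ (hq _)) (hP (hp _))⟩, rfl⟩)
    have hxy : q 0 * (x - y) ∈ P * (P + Q) ^ (n + 1) := by
      have hle : Q * (P * (P + Q) ^ n) ≤ P * (P + Q) ^ (n + 1) := by
        rw [pow_succ', ← mul_assoc, ← mul_assoc]
        gcongr ?_ * _
        exact hQP.trans (by gcongr)
      exact hle (Submodule.mul_mem_mul (hq 0) (ih (fun i => hp i.succ) fun i => hq i.succ))
    have hprod_sub : (List.ofFn fun i => q i - p i).prod = (q 0 - p 0) * x := by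
      rw [List.ofFn_succ, List.prod_cons]
    have hprod : (List.ofFn q).prod = q 0 * y := by rw [List.ofFn_succ, List.prod_cons]
    have hsplit : (q 0 - p 0) * x - q 0 * y = q 0 * (x - y) - p 0 * x := by
      rw [sub_mul, mul_sub, sub_right_comm]
    rw [hprod_sub, hprod, hsplit]
    exact sub_mem hxy (Submodule.mul_mem_mul (hp 0) hx)

end NoncommutativeExpansion

section Transfer

variable {K : Type*} [CommRing K] {G : Type*} [Group G] {E : Type*} [Ring E] [Algebra K E]
  (σ : G →* (E →ₐ[K] E)) {V : Submodule K E} {ε : K}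

/-- The subalgebra of elements fixed by a group acting through algebra endomorphisms. -/
def fixedSubalgebra : Subalgebra K E where
  carrier := {x | ∀ g, σ g x = x}
  mul_mem' hx hy g := by rw [map_mul, hx, hy]
  add_mem' hx hy g := by rw [map_add, hx, hy]
  algebraMap_mem' c g := (σ g).commutes c

/-- The orbit map `x ↦ (g ↦ σ g x)` into the algebra of functions on the group. -/
def orbitMap : E →ₐ[K] (G → E) := AlgHom.pi fun g => σ g

variable (V) in
/-- The functions `g ↦ σ g v` with `v ∈ V`. -/
def orbitSubmodule : Submodule K (G → E) := V.map (orbitMap σ).toLinearMap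

variable (G V) in
/-- The constant functions on the group with value in `V`. -/
def constSubmodule : Submodule K (G → E) := V.map (Pi.constAlgHom K G E).toLinearMap

variable {σ} in
theorem constSubmodule_mul_orbitSubmodule_le (hV : ∀ a ∈ V, ∀ b ∈ V, a * b = ε • (b * a))
    (hσ : ∀ g, ∀ a ∈ V, σ g a ∈ V) :
    constSubmodule G V * orbitSubmodule σ V ≤ orbitSubmodule σ V * constSubmodule G V := by
  rw [Submodule.mul_le]
  rintro _ ⟨b, hb, rfl⟩ _ ⟨a, ha, rfl⟩
  have hswap : Pi.constAlgHom K G E b * orbitMap σ a =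
      ε • (orbitMap σ a * Pi.constAlgHom K G E b) :=
    funext fun g => hV b hb _ (hσ g a ha)
  exact hswap ▸ Submodule.smul_mem _ ε (Submodule.mul_mem_mul ⟨a, ha, rfl⟩ ⟨b, hb, rfl⟩)

variable [Fintype G]

variable {σ} in
theorem prod_ofFn_const_mem (hV : ∀ a ∈ V, ∀ b ∈ V, a * b = ε • (b * a))
    (hσ : ∀ g, ∀ a ∈ V, σ g a ∈ V) {n : ℕ} (hn : Fintype.card G = n + 1) {y : Fin (n + 1) → E}
    (hy : ∀ i, y i ∈ V) :
    (List.ofFn fun i => Pi.constAlgHom K G E (y i)).prod ∈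
      orbitSubmodule σ V * (orbitSubmodule σ V + constSubmodule G V) ^ n := by
  obtain ⟨e⟩ : Nonempty (Fin (n + 1) ≃ G) := ⟨(Fintype.equivFinOfCardEq hn).symm⟩
  let p (i : Fin (n + 1)) : G → E := orbitMap σ (σ (e i)⁻¹ (y i))
  let q (i : Fin (n + 1)) : G → E := Pi.constAlgHom K G E (y i)
  have hp (i) : p i ∈ orbitSubmodule σ V := Submodule.mem_map_of_mem (hσ _ _ (hy i))
  have hq (i) : q i ∈ constSubmodule G V := Submodule.mem_map_of_mem (hy i)
  have hzero : (List.ofFn fun i => q i - p i).prod = 0 := by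
    funext g
    -- the factor with index `e.symm g` vanishes at `g`
    rw [Pi.list_prod_apply]
    refine List.prod_eq_zero (List.mem_map.2 ⟨_, List.mem_ofFn.2 ⟨e.symm g, rfl⟩, ?_⟩)
    simp [p, q, orbitMap, ← AlgHom.mul_apply, ← map_mul]
  have hQP := constSubmodule_mul_orbitSubmodule_le hV hσ
  have hexpand := prod_ofFn_sub_sub_prod_ofFn_mem hQP hp hq
  rw [hzero, zero_sub] at hexpand
  exact (Submodule.neg_mem_iff _).1 hexpand

variable {σ} in
theorem constSubmodule_pow_card_le (hV : ∀ a ∈ V, ∀ b ∈ V, a * b = ε • (b * a))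
    (hσ : ∀ g, ∀ a ∈ V, σ g a ∈ V) {n : ℕ} (hn : Fintype.card G = n + 1) :
    constSubmodule G V ^ (n + 1) ≤
      orbitSubmodule σ V * (orbitSubmodule σ V + constSubmodule G V) ^ n := by
  rw [Submodule.pow_eq_span_pow_set, Submodule.span_le]
  intro _ hy
  obtain ⟨q, rfl⟩ := Set.mem_pow.1 hy
  choose y hyV hyq using fun i => (q i).2
  have hprod : (List.ofFn fun i => (q i : G → E)).prod =
      (List.ofFn fun i => Pi.constAlgHom K G E (y i)).prod :=
    congrArg (fun f => (List.ofFn f).prod) (funext fun i => (hyq i).symm)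
  rw [hprod]
  exact prod_ofFn_const_mem hV hσ hn hyV

/-- The transfer `x ↦ ∑ g, σ g x` into the fixed subalgebra. -/
def transfer : E →ₗ[K] E :=
  Representation.norm (AlgHom.toEnd.comp σ)

theorem transfer_apply (x : E) : transfer σ x = ∑ g, σ g x := by
  simp [transfer, Representation.norm]

theorem map_transfer (g : G) (x : E) : σ g (transfer σ x) = transfer σ x :=
  Representation.self_norm_apply (AlgHom.toEnd.comp σ) g x

theorem transfer_transfer_mul (x y : E) :
    transfer σ (transfer σ x * y) = transfer σ x * transfer σ y := by
  simp only [transfer_apply σ (_ * y), map_mul, map_transfer, transfer_apply σ y, Finset.mul_sum]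

variable {σ}

theorem transfer_eq_card_smul {x : E} (hx : x ∈ fixedSubalgebra σ) :
    transfer σ x = (Fintype.card G : K) • x := by
  have hx' (g : G) : σ g x = x := hx g
  simp [transfer_apply, hx', Nat.cast_smul_eq_nsmul]

theorem transfer_sum_mul_mem {A : Subalgebra K E} (hV : ∀ a ∈ V, ∀ b ∈ V, a * b = ε • (b * a))
    (hσ : ∀ g, ∀ a ∈ V, σ g a ∈ V) {m n : ℕ} (hm : 0 < m)
    (hA : ∀ k < n + 1 + m, ∀ x ∈ V ^ k, transfer σ x ∈ A) {z : E} (hz : z ∈ V ^ m)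
    {F : G → E} (hF : F ∈ orbitSubmodule σ V * (orbitSubmodule σ V + constSubmodule G V) ^ n) :
    transfer σ ((∑ g, F g) * z) ∈ A := by
  let Φ : (G → E) →ₗ[K] E :=
    transfer σ ∘ₗ LinearMap.mulRight K z ∘ₗ ∑ g, LinearMap.proj g
  have hΦ (F : G → E) : Φ F = transfer σ ((∑ g, F g) * z) := by simp [Φ, Finset.sum_mul]
  suffices hle : _ ≤ A.toSubmodule.comap Φ from hΦ F ▸ hle hF
  refine mul_add_pow_le (constSubmodule_mul_orbitSubmodule_le hV hσ) fun i j hij => ?_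
  rw [← pow_succ', orbitSubmodule, constSubmodule, ← Submodule.map_pow, ← Submodule.map_pow,
    Submodule.mul_le]
  rintro _ ⟨a, ha, rfl⟩ _ ⟨b, hb, rfl⟩
  have hsum : ∑ g, (orbitMap σ a * Pi.constAlgHom K G E b) g = transfer σ a * b := by
    simp [orbitMap, transfer_apply, Finset.sum_mul]
  have hbz : b * z ∈ V ^ (j + m) := pow_add V j m ▸ Submodule.mul_mem_mul hb hz
  change Φ (orbitMap σ a * Pi.constAlgHom K G E b) ∈ A
  rw [hΦ, hsum, mul_assoc, transfer_transfer_mul]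
  exact mul_mem (hA _ (by lia) a ha) (hA _ (by lia) _ hbz)

theorem transfer_mem_of_mem_pow {A : Subalgebra K E} (hG : IsUnit (Fintype.card G : K))
    (hV : ∀ a ∈ V, ∀ b ∈ V, a * b = ε • (b * a)) (hσ : ∀ g, ∀ a ∈ V, σ g a ∈ V)
    (hA : ∀ k ≤ Fintype.card G, ∀ x ∈ V ^ k, transfer σ x ∈ A) (k : ℕ) :
    ∀ x ∈ V ^ k, transfer σ x ∈ A := by
  induction k using Nat.strong_induction_on with
  | _ k ih =>
  rcases le_or_gt k (Fintype.card G) with hk | hk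
  · exact hA k hk
  obtain ⟨n, hn⟩ : ∃ n, Fintype.card G = n + 1 :=
    Nat.exists_eq_succ_of_ne_zero Fintype.card_ne_zero
  obtain ⟨m, rfl⟩ := Nat.exists_eq_add_of_lt hk
  suffices hle : V ^ Fintype.card G * V ^ (m + 1) ≤ A.toSubmodule.comap (transfer σ) from
    fun x hx => hle (by rwa [← pow_add])
  rw [Submodule.mul_le]
  intro y hy z hz
  have hconst : Pi.constAlgHom K G E y ∈ constSubmodule G V ^ (n + 1) := by
    rw [constSubmodule, ← Submodule.map_pow]
    exact ⟨y, hn ▸ hy, rfl⟩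
  have hmem := transfer_sum_mul_mem hV hσ m.succ_pos (hn ▸ ih) hz
    (constSubmodule_pow_card_le hV hσ hn hconst)
  refine (Submodule.smul_mem_iff_of_isUnit _ hG).1 ?_
  simpa [Nat.cast_smul_eq_nsmul, Algebra.smul_def, mul_assoc] using hmem

theorem fixedSubalgebra_le_of_transfer_mem {A : Subalgebra K E} (hG : IsUnit (Fintype.card G : K))
    (hV : ∀ a ∈ V, ∀ b ∈ V, a * b = ε • (b * a)) (hσ : ∀ g, ∀ a ∈ V, σ g a ∈ V)
    (htop : ⨆ k, V ^ k = ⊤) (hA : ∀ k ≤ Fintype.card G, ∀ x ∈ V ^ k, transfer σ x ∈ A) :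
    fixedSubalgebra σ ≤ A := by
  intro x hx
  have hle : ⊤ ≤ A.toSubmodule.comap (transfer σ) :=
    htop ▸ iSup_le (transfer_mem_of_mem_pow hG hV hσ hA)
  have hcard : (Fintype.card G : K) • x ∈ A.toSubmodule :=
    transfer_eq_card_smul hx ▸ hle trivial
  exact (Submodule.smul_mem_iff_of_isUnit _ hG).1 hcard

end Transfer

section ExteriorAction

variable {K : Type*} [CommRing K] {G : Type*} [Group G]
  {M : Type*} [AddCommGroup M] [Module K M] (ρ : Representation K G M)

/-- The action of `G` on the exterior algebra of a representation by algebra endomorphisms. -/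
noncomputable def exteriorAction : G →* (ExteriorAlgebra K M →ₐ[K] ExteriorAlgebra K M) where
  toFun g := ExteriorAlgebra.map (ρ g)
  map_one' := by
    rw [map_one]
    exact ExteriorAlgebra.map_id
  map_mul' g h := by
    rw [map_mul]
    exact (ExteriorAlgebra.map_comp_map _ _).symm

theorem exteriorAction_apply (g : G) : exteriorAction ρ g = ExteriorAlgebra.map (ρ g) :=
  rfl

variable {ρ}

theorem fixedSubalgebra_exteriorAction_le [Fintype G] (hG : IsUnit (Fintype.card G : K))
    {A : Subalgebra K (ExteriorAlgebra K M)}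
    (hA : ∀ k ≤ Fintype.card G, ⋀[K]^k M ≤ A.toSubmodule.comap (transfer (exteriorAction ρ))) :
    fixedSubalgebra (exteriorAction ρ) ≤ A := by
  refine fixedSubalgebra_le_of_transfer_mem (V := LinearMap.range (ExteriorAlgebra.ι K))
    (ε := -1) hG ?_ ?_ ?_ hA
  · rintro _ ⟨x, rfl⟩ _ ⟨y, rfl⟩
    rw [neg_one_smul]
    exact eq_neg_of_add_eq_zero_left (ExteriorAlgebra.ι_add_mul_swap x y)
  · rintro g _ ⟨x, rfl⟩
    exact ⟨ρ g x, (ExteriorAlgebra.map_apply_ι _ _).symm⟩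
  · exact (DirectSum.Decomposition.isInternal fun k => ⋀[K]^k M).submodule_iSup_eq_top

end ExteriorAction

section ExteriorTensor

variable {K : Type*} [Field K] {W U : Type*} [AddCommGroup W] [Module K W]
  [AddCommGroup U] [Module K U]

open scoped TensorProduct

theorem exteriorPower_tensorProduct_le_of_forall_linearIndependent {n : ℕ}
    (hn : n ≤ Module.rank K U) {N : Submodule K (ExteriorAlgebra K (W ⊗[K] U))}
    (hN : ∀ (w : Fin n → W) (u : Fin n → U), LinearIndependent K u →
      ExteriorAlgebra.ιMulti K n (fun i => w i ⊗ₜ u i) ∈ N) : ⋀[K]^n (W ⊗[K] U) ≤ N := by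
  rw [← exteriorPower.ιMulti_span_fixedDegree_of_span_eq_top K n _
    (TensorProduct.span_tmul_eq_top K W U), Submodule.span_le]
  rintro _ ⟨x, hx, rfl⟩
  choose w u hwu using fun i => hx (Set.mem_range_self i)
  obtain rfl : (fun i => w i ⊗ₜ u i) = x := funext hwu
  exact multilinearMap_mem_of_forall_linearIndependent N
    ((ExteriorAlgebra.ιMulti K n).toMultilinearMap.compLinearMap
      fun i => TensorProduct.mk K W U (w i)) (by simpa using hn) (hN w) u

end ExteriorTensor

section Polarization

variable {K : Type*} [Field K] {G : Type*} [Group G] {W U U₀ : Type*}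
  [AddCommGroup W] [Module K W] [AddCommGroup U] [Module K U] [AddCommGroup U₀] [Module K U₀]

open scoped TensorProduct

/-- The action of `G` on `Λ(W ⊗ U)` through the first tensor factor. -/
noncomputable abbrev exteriorTensorAction (ρ : Representation K G W) (U : Type*) [AddCommGroup U]
    [Module K U] : G →* (ExteriorAlgebra K (W ⊗[K] U) →ₐ[K] ExteriorAlgebra K (W ⊗[K] U)) :=
  exteriorAction (ρ.tprod (Representation.trivial K G U))

variable (W) in
/-- The algebra homomorphism `Λ(W ⊗ U₀) → Λ(W ⊗ U)` induced by a linear map `U₀ → U`. -/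
noncomputable abbrev exteriorTensorMap (φ : U₀ →ₗ[K] U) :
    ExteriorAlgebra K (W ⊗[K] U₀) →ₐ[K] ExteriorAlgebra K (W ⊗[K] U) :=
  ExteriorAlgebra.map (φ.lTensor W)

theorem exteriorTensorAction_exteriorTensorMap (ρ : Representation K G W) (φ : U₀ →ₗ[K] U) (g : G)
    (x : ExteriorAlgebra K (W ⊗[K] U₀)) :
    exteriorTensorAction ρ U g (exteriorTensorMap W φ x) =
      exteriorTensorMap W φ (exteriorTensorAction ρ U₀ g x) := by
  have hcomm : (ρ.tprod (Representation.trivial K G U)) g ∘ₗ φ.lTensor W =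
      φ.lTensor W ∘ₗ (ρ.tprod (Representation.trivial K G U₀)) g :=
    TensorProduct.ext' fun _ _ => rfl
  simp only [exteriorAction_apply, ← AlgHom.comp_apply, ExteriorAlgebra.map_comp_map, hcomm]

theorem exteriorTensorMap_mem_fixedSubalgebra {ρ : Representation K G W} (φ : U₀ →ₗ[K] U)
    {x : ExteriorAlgebra K (W ⊗[K] U₀)} (hx : x ∈ fixedSubalgebra (exteriorTensorAction ρ U₀)) :
    exteriorTensorMap W φ x ∈ fixedSubalgebra (exteriorTensorAction ρ U) := fun g => by
  rw [exteriorTensorAction_exteriorTensorMap, hx g]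

theorem transfer_exteriorTensorMap [Fintype G] (ρ : Representation K G W) (φ : U₀ →ₗ[K] U)
    (x : ExteriorAlgebra K (W ⊗[K] U₀)) :
    transfer (exteriorTensorAction ρ U) (exteriorTensorMap W φ x) =
      exteriorTensorMap W φ (transfer (exteriorTensorAction ρ U₀) x) := by
  simp only [transfer_apply, exteriorTensorAction_exteriorTensorMap, map_sum]

/-- The polarization of `S ⊆ Λ(W ⊗ U₀)` along `φ : U₀ → U`: all `GL(U)`-translates of the image
of `S` in `Λ(W ⊗ U)`. -/
def polarization (φ : U₀ →ₗ[K] U) (S : Set (ExteriorAlgebra K (W ⊗[K] U₀))) :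
    Set (ExteriorAlgebra K (W ⊗[K] U)) :=
  {e | ∃ f ∈ S, ∃ B : LinearMap.GeneralLinearGroup K U,
    e = exteriorTensorMap W (B : U →ₗ[K] U) (exteriorTensorMap W φ f)}

theorem exteriorTensorMap_mem_adjoin_polarization (φ : U₀ →ₗ[K] U)
    {S : Set (ExteriorAlgebra K (W ⊗[K] U₀))} {x : ExteriorAlgebra K (W ⊗[K] U₀)}
    (hx : x ∈ Algebra.adjoin K S) (B : LinearMap.GeneralLinearGroup K U) :
    exteriorTensorMap W (B : U →ₗ[K] U) (exteriorTensorMap W φ x) ∈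
      Algebra.adjoin K (polarization φ S) := by
  have hle : Algebra.adjoin K S ≤ (Algebra.adjoin K (polarization φ S)).comap
      ((exteriorTensorMap W (B : U →ₗ[K] U)).comp (exteriorTensorMap W φ)) :=
    Algebra.adjoin_le fun f hf => Algebra.subset_adjoin ⟨f, hf, B, rfl⟩
  exact hle hx

theorem transfer_ιMulti_tmul_mem_adjoin_polarization [Fintype G] {ρ : Representation K G W}
    {φ : U₀ →ₗ[K] U} (hφ : Function.Injective φ) {S : Set (ExteriorAlgebra K (W ⊗[K] U₀))}
    (hS : fixedSubalgebra (exteriorTensorAction ρ U₀) ≤ Algebra.adjoin K S) {n : ℕ}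
    (hn : n ≤ Module.rank K U₀) (w : Fin n → W) {u : Fin n → U} (hu : LinearIndependent K u) :
    transfer (exteriorTensorAction ρ U) (ExteriorAlgebra.ιMulti K n fun i => w i ⊗ₜ u i) ∈
      Algebra.adjoin K (polarization φ S) := by
  obtain ⟨v, hv⟩ := Module.le_rank_iff.1 hn
  obtain ⟨B, hB⟩ := exists_linearEquiv_apply_eq_of_linearIndependent
    (hv.map' φ (LinearMap.ker_eq_bot.2 hφ)) hu
  let C := LinearMap.GeneralLinearGroup.ofLinearEquiv B
  have hι : ExteriorAlgebra.ιMulti K n (fun i => w i ⊗ₜ u i) =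
      exteriorTensorMap W (C : U →ₗ[K] U) (exteriorTensorMap W φ
        (ExteriorAlgebra.ιMulti K n fun i => w i ⊗ₜ v i)) := by
    rw [ExteriorAlgebra.map_apply_ιMulti, ExteriorAlgebra.map_apply_ιMulti]
    exact congrArg _ (funext fun i => congrArg (w i ⊗ₜ ·) (hB i).symm)
  rw [hι, transfer_exteriorTensorMap, transfer_exteriorTensorMap]
  exact exteriorTensorMap_mem_adjoin_polarization φ (hS fun g => map_transfer _ g _) C

theorem polarization_exterior_algebra_general [Fintype G] (hG : (Fintype.card G : K) ≠ 0)
    (ρ : Representation K G W) {φ : U₀ →ₗ[K] U} (hφ : Function.Injective φ)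
    (hU₀ : Fintype.card G ≤ Module.rank K U₀) {S : Set (ExteriorAlgebra K (W ⊗[K] U₀))}
    (hS : Algebra.adjoin K S = fixedSubalgebra (exteriorTensorAction ρ U₀)) :
    Algebra.adjoin K (polarization φ S) = fixedSubalgebra (exteriorTensorAction ρ U) := by
  refine le_antisymm (Algebra.adjoin_le ?_) (fixedSubalgebra_exteriorAction_le hG.isUnit ?_)
  · rintro _ ⟨f, hf, B, rfl⟩
    exact exteriorTensorMap_mem_fixedSubalgebra _
      (exteriorTensorMap_mem_fixedSubalgebra φ (hS ▸ Algebra.subset_adjoin hf))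
  · intro n hn
    have hnU₀ : n ≤ Module.rank K U₀ := (Nat.cast_le.2 hn).trans hU₀
    obtain ⟨v, hv⟩ := Module.le_rank_iff.1 hnU₀
    have hnU : n ≤ Module.rank K U :=
      Module.le_rank_iff.2 ⟨φ ∘ v, hv.map' φ (LinearMap.ker_eq_bot.2 hφ)⟩
    exact exteriorPower_tensorProduct_le_of_forall_linearIndependent hnU fun w u hu =>
      transfer_ιMulti_tmul_mem_adjoin_polarization hφ hS.ge hnU₀ w hu

theorem stdIncl_injective (s r : ℕ) (h : s ≤ r) : Function.Injective (stdIncl K s r h) := by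
  intro x y hxy
  ext i
  simpa [stdIncl, Pi.single_apply, Fin.castLE_inj] using congrFun hxy (Fin.castLE h i)

theorem polarization_stdIncl (s r : ℕ) (h : s ≤ r)
    (S : Set (ExteriorAlgebra K (W ⊗[K] (Fin s → K)))) :
    polarization (stdIncl K s r h) S = {e | ∃ f ∈ S, ∃ B : Matrix.GeneralLinearGroup (Fin r) K,
      e = extGLAct K W r B (extIncl K W s r h f)} :=
  Set.ext fun _ => exists_congr fun _ => and_congr_right fun _ =>
    Matrix.GeneralLinearGroup.toLin.surjective.exists

end Polarization

/-- **Polarization for the exterior algebra.**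
Let `G` be a finite group acting on the finite-dimensional vector space `W`
over a field of characteristic zero, `t = |G|`, and `r ≥ s ≥ t`.  If
`S ⊆ Λ(W ⊗ K^s)^G` generates `Λ(W ⊗ K^s)^G` as a `K`-algebra, then the
polarized set `{B · f : f ∈ S, B ∈ GL_r(K)}` generates `Λ(W ⊗ K^r)^G` as a
`K`-algebra. -/
theorem polarization_exterior_algebra
    (K : Type*) [Field K] [CharZero K]
    (G : Type*) [Group G] [Fintype G]
    (W : Type*) [AddCommGroup W] [Module K W] [FiniteDimensional K W]
    (ρ : Representation K G W)
    (s r : ℕ) (hs : Fintype.card G ≤ s) (hr : s ≤ r)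
    (S : Set (ExteriorAlgebra K (TensorProduct K W (Fin s → K))))
    (hSinv : ∀ f ∈ S, ∀ g : G, extGAct K ρ s g f = f)
    (hSgen : ∀ x : ExteriorAlgebra K (TensorProduct K W (Fin s → K)),
      x ∈ Algebra.adjoin K S ↔ ∀ g : G, extGAct K ρ s g x = x) :
    ∀ x : ExteriorAlgebra K (TensorProduct K W (Fin r → K)),
      x ∈ Algebra.adjoin K
          {e | ∃ f ∈ S, ∃ B : Matrix.GeneralLinearGroup (Fin r) K,
            e = extGLAct K W r B (extIncl K W s r hr f)}
        ↔ ∀ g : G, extGAct K ρ r g x = x :=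
  polarization_stdIncl s r hr S ▸ SetLike.ext_iff.1 (polarization_exterior_algebra_general
    (Nat.cast_ne_zero.2 Fintype.card_ne_zero) ρ (stdIncl_injective s r hr) (by simpa using hs)
    (SetLike.ext hSgen))
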